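/- Fix a labelled Markov chain ⟨S, L, τ, ℓ⟩. Define the sequence of relations R₀ = ∼ (probabilistic bisimilarity, which is itself a probabilistic bisimulation) and R_{n+1} = Refine(R_n). Then the sequence is decreasing with respect to inclusion, there exists n with R_{n+1} = R_n, and this eventual fixed point equals robust probabilistic bisimilarity ≃; equivalently, ≃ is the greatest fixed point of Refine and the iteration starting from ∼ computes ≃. -/

import Mathlib

open Finset Filter
open scoped Classical

/-- `μ` is a probability distribution on the finite type `X`. -/
def IsDist {X : Type*} [Fintype X] (μ : X → ℝ) : Prop :=
  (∀ x, 0 ≤ μ x) ∧ ∑ x, μ x = 1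

/-- `ω` is a coupling of the distributions `μ` and `ν`. -/
def IsCoupling {X : Type*} [Fintype X] (ω : X × X → ℝ) (μ ν : X → ℝ) : Prop :=
  IsDist ω ∧ (∀ x, ∑ y, ω (x, y) = μ x) ∧ (∀ x, ∑ y, ω (y, x) = ν x)

/-- Total variation distance: the maximum pointwise difference. -/
noncomputable def dTV {X : Type*} [Fintype X] (μ ν : X → ℝ) : ℝ :=
  ⨆ x, |μ x - ν x|

/-- The support of a (sub)distribution: points of positive probability. -/
def psupp {X : Type*} (μ : X → ℝ) : Set X := {x | 0 < μ x}

/-- Distance between functions into distributions. -/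
noncomputable def dF {A B : Type*} [Fintype B] (f g : A → B → ℝ) : ℝ :=
  ⨆ a, dTV (f a) (g a)

/-- `τ` is a transition probability function on `S`. -/
def IsTransFn {S : Type*} [Fintype S] (τ : S → S → ℝ) : Prop := ∀ s, IsDist (τ s)

/-- The diagonal `S²_Δ`. -/
def SDelta (S : Type*) : Set (S × S) := {p | p.1 = p.2}

/-- `P` is a policy for `τ` (with labelling `ℓ`). -/
def IsPolicy {S L : Type*} [Fintype S] (ℓ : S → L) (τ : S → S → ℝ)
    (P : S × S → S × S → ℝ) : Prop :=
  (∀ p, IsDist (P p)) ∧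
  (∀ p : S × S, ℓ p.1 = ℓ p.2 → IsCoupling (P p) (τ p.1) (τ p.2)) ∧
  (∀ p : S × S, ℓ p.1 ≠ ℓ p.2 → psupp (P p) = {p})

/-- A policy is `S²_Δ`-closed if the support of `P (s,s)` lies in the diagonal. -/
def DeltaClosed {S : Type*} (P : S × S → S × S → ℝ) : Prop :=
  ∀ s : S, psupp (P (s, s)) ⊆ SDelta S

/-- `d` is a `[0,1]`-valued function. -/
def Is01 {A : Type*} (d : A → ℝ) : Prop := ∀ a, 0 ≤ d a ∧ d a ≤ 1

/-- `d` is the least fixed point of `F` on the complete lattice of `[0,1]`-valued functions. -/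
def IsLfpOn {A : Type*} (F : (A → ℝ) → (A → ℝ)) (d : A → ℝ) : Prop :=
  Is01 d ∧ F d = d ∧ ∀ e, Is01 e → F e = e → ∀ a, d a ≤ e a

/-- The map `Γ_P` whose least fixed point is `γ_P`. -/
noncomputable def GammaF {S L : Type*} [Fintype S] (ℓ : S → L)
    (P : S × S → S × S → ℝ) (d : S × S → ℝ) : S × S → ℝ :=
  fun p => if ℓ p.1 ≠ ℓ p.2 then 1 else ∑ q, P p q * d q

/-- The map `Δ_τ` whose least fixed point is the probabilistic bisimilarity distance `δ_τ`. -/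
noncomputable def DeltaF {S L : Type*} [Fintype S] (ℓ : S → L)
    (τ : S → S → ℝ) (d : S × S → ℝ) : S × S → ℝ :=
  fun p => if ℓ p.1 ≠ ℓ p.2 then 1
    else sInf {r | ∃ ω, IsCoupling ω (τ p.1) (τ p.2) ∧ r = ∑ q, ω q * d q}

/-- The map whose least fixed point is `ρ_P`, the probability of reaching `S²_Δ`. -/
noncomputable def ReachF {S : Type*} [Fintype S]
    (P : S × S → S × S → ℝ) (e : S × S → ℝ) : S × S → ℝ :=
  fun p => if p.1 = p.2 then 1 else ∑ q, P p q * e q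

/-- States `s` and `t` are robustly probabilistically bisimilar. -/
def Robust {S L : Type*} [Fintype S] (ℓ : S → L) (τ : S → S → ℝ) (s t : S) : Prop :=
  ∃ P ρ, IsPolicy ℓ τ P ∧ IsLfpOn (ReachF P) ρ ∧ ρ (s, t) = 1

/-- `R` is a probabilistic bisimulation. -/
def IsBisim {S L : Type*} [Fintype S] (ℓ : S → L) (τ : S → S → ℝ)
    (R : Set (S × S)) : Prop :=
  Equivalence (fun s t => (s, t) ∈ R) ∧
  ∀ p ∈ R, ℓ p.1 = ℓ p.2 ∧ ∃ ω, IsCoupling ω (τ p.1) (τ p.2) ∧ psupp ω ⊆ R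

/-- Probabilistic bisimilarity `∼`. -/
def Bisimilar {S L : Type*} [Fintype S] (ℓ : S → L) (τ : S → S → ℝ) (s t : S) : Prop :=
  ∃ R, IsBisim ℓ τ R ∧ (s, t) ∈ R

/-- A step of a path in `⟨S×S, P⟩` supported by `R`. -/
def SupStep {S : Type*} (P : S × S → S × S → ℝ) (R : Set (S × S)) (a b : S × S) : Prop :=
  a ∈ R ∧ psupp (P a) ⊆ R ∧ 0 < P a b

/-- `R` supports a path from `p` to `S²_Δ` in `⟨S×S, P⟩`. -/
def SupportsPathToDelta {S : Type*} (P : S × S → S × S → ℝ) (R : Set (S × S))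
    (p : S × S) : Prop :=
  ∃ q : S × S, q.1 = q.2 ∧ Relation.ReflTransGen (SupStep P R) p q ∧
    q ∈ R ∧ psupp (P q) ⊆ R

/-- `R` is a robust bisimulation. -/
def IsRobustBisim {S L : Type*} [Fintype S] (ℓ : S → L) (τ : S → S → ℝ)
    (R : Set (S × S)) : Prop :=
  IsBisim ℓ τ R ∧ ∀ p ∈ R, ∃ P, IsPolicy ℓ τ P ∧ SupportsPathToDelta P R p

/-- The function `Filter` from the algorithm. -/
def FilterFn {S L : Type*} [Fintype S] (ℓ : S → L) (τ : S → S → ℝ)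
    (R : Set (S × S)) : Set (S × S) :=
  {p ∈ R | ∃ P, IsPolicy ℓ τ P ∧ SupportsPathToDelta P R p}

/-- The function `Prune` from the algorithm. -/
def PruneFn {S : Type*} (Q : Set (S × S)) : Set (S × S) :=
  {p ∈ Q | ∀ u : S, ((p.2, u) ∈ Q → (p.1, u) ∈ Q) ∧ ((u, p.1) ∈ Q → (u, p.2) ∈ Q)}

/-- `B` is the greatest probabilistic bisimulation contained in `Q` (i.e. `B = Bisim(Q)`). -/
def IsGreatestBisimIn {S L : Type*} [Fintype S] (ℓ : S → L) (τ : S → S → ℝ)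
    (Q B : Set (S × S)) : Prop :=
  IsBisim ℓ τ B ∧ B ⊆ Q ∧ ∀ B', IsBisim ℓ τ B' → B' ⊆ Q → B' ⊆ B

/-- Reachability in the Markov chain `⟨S×S, P⟩`. -/
def Reach {S : Type*} (P : S × S → S × S → ℝ) (p q : S × S) : Prop :=
  Relation.ReflTransGen (fun a b => 0 < P a b) p q

/-- `C` is a communication class of `⟨S×S, P⟩`. -/
def IsCommClass {S : Type*} (P : S × S → S × S → ℝ) (C : Set (S × S)) : Prop :=
  ∃ p, C = {q | Reach P p q ∧ Reach P q p}

/-- `C` is closed: no transition of positive probability leaves `C`. -/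
def IsClosedClass {S : Type*} (P : S × S → S × S → ℝ) (C : Set (S × S)) : Prop :=
  ∀ p ∈ C, psupp (P p) ⊆ C

/-!
Call a relation `R` post-fixed if `R ⊆ Filter(R)`. Robust bisimilarity `≃` is the greatest
post-fixed relation. On the one hand, a single policy can be chosen that from every pair of
`Filter(R)` makes progress towards the diagonal inside `R`; if `R` is post-fixed then, by the
minimum principle applied to a pair of `R` at which the reachability probability is smallest, this
policy reaches the diagonal from `R` almost surely. On the other hand, a pair reaching the diagonal
with probability `1` under `P` does so along a path all of whose pairs have reachability
probability `1`.

`Filter` is compatible with converse and relational composition, the latter by gluing couplings.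
Hence the greatest post-fixed relation is an equivalence, it is not cut down by `Prune ∘ Filter`
applied to a transitive relation containing it, and therefore it is contained in every `R n`. A
relation at which the iteration stabilises is post-fixed, so it is contained in `≃`.
-/

open scoped SetRel

section Coupling

variable {X : Type*} [Fintype X] {μ ν κ : X → ℝ} {ω ω' : X × X → ℝ}

theorem IsCoupling.swap (h : IsCoupling ω μ ν) : IsCoupling (ω ∘ Prod.swap) ν μ :=
  ⟨⟨fun _ => h.1.1 _, ((Equiv.prodComm X X).sum_comp ω).trans h.1.2⟩, h.2.2, h.2.1⟩

theorem IsCoupling.isDist_left (h : IsCoupling ω μ ν) : IsDist μ := by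
  refine ⟨fun x => h.2.1 x ▸ sum_nonneg fun _ _ => h.1.1 _, ?_⟩
  simp only [← h.2.1, ← Fintype.sum_prod_type, h.1.2]

theorem IsCoupling.of_marginals (hμ : IsDist μ) (hω : ∀ p, 0 ≤ ω p)
    (hleft : ∀ x, ∑ y, ω (x, y) = μ x) (hright : ∀ y, ∑ x, ω (x, y) = ν y) :
    IsCoupling ω μ ν :=
  ⟨⟨hω, by simp only [Fintype.sum_prod_type, hleft, hμ.2]⟩, hleft, hright⟩

theorem IsCoupling.apply_le_left (h : IsCoupling ω μ ν) (p : X × X) : ω p ≤ μ p.1 :=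
  h.2.1 p.1 ▸ single_le_sum (f := fun y => ω (p.1, y)) (fun _ _ => h.1.1 _) (mem_univ p.2)

theorem IsCoupling.apply_le_right (h : IsCoupling ω μ ν) (p : X × X) : ω p ≤ ν p.2 :=
  h.swap.apply_le_left p.swap

theorem IsCoupling.exists_mem_psupp (h : IsCoupling ω μ ν) {x : X} (hx : 0 < μ x) :
    ∃ y, (x, y) ∈ psupp ω := by
  rw [← h.2.1 x, sum_pos_iff_of_nonneg fun _ _ => h.1.1 _] at hx
  simpa [psupp] using hx

theorem IsDist.exists_isCoupling_self (hμ : IsDist μ) :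
    ∃ ω, IsCoupling ω μ μ ∧ psupp ω ⊆ SDelta X := by
  refine ⟨fun p => if p.1 = p.2 then μ p.1 else 0,
    .of_marginals hμ (fun p => ?_) (by simp) (by simp), fun p hp => ?_⟩
  · split_ifs
    exacts [hμ.1 _, le_rfl]
  · by_contra hne
    exact (show 0 < if p.1 = p.2 then μ p.1 else 0 from hp).ne' (if_neg hne)

theorem IsDist.isCoupling_mul (hμ : IsDist μ) (hν : IsDist ν) :
    IsCoupling (fun p => μ p.1 * ν p.2) μ ν :=
  .of_marginals hμ (fun p => mul_nonneg (hμ.1 p.1) (hν.1 p.2))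
    (fun x => by simp only [← mul_sum, hν.2, mul_one])
    (fun y => by simp only [← sum_mul, hμ.2, one_mul])

/-- The gluing of a coupling `ω` of `μ, ν` with a coupling `ω'` of `ν, κ`: the two are made
conditionally independent given the middle coordinate. Middle points with `ν y = 0` contribute `0`
by the convention `x / 0 = 0`, which is the right value since `ω (x, y)` and `ω' (y, z)` vanish
there. -/
noncomputable def gluing (ν : X → ℝ) (ω ω' : X × X → ℝ) (p : X × X) : ℝ :=
  ∑ y, ω (p.1, y) * ω' (y, p.2) / ν y

theorem gluing_comp_swap (ν : X → ℝ) (ω ω' : X × X → ℝ) :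
    gluing ν ω ω' ∘ Prod.swap = gluing ν (ω' ∘ Prod.swap) (ω ∘ Prod.swap) := by
  ext p
  simp only [gluing, Function.comp_apply, Prod.swap, mul_comm]

theorem IsCoupling.sum_gluing (h : IsCoupling ω μ ν) (h' : IsCoupling ω' ν κ) (x : X) :
    ∑ z, gluing ν ω ω' (x, z) = μ x := by
  have cancel (y : X) : ω (x, y) * ν y / ν y = ω (x, y) := by
    refine mul_div_cancel_of_imp fun hy => le_antisymm ?_ (h.1.1 _)
    exact hy ▸ h.apply_le_right (x, y)
  calc ∑ z, gluing ν ω ω' (x, z) = ∑ y, ∑ z, ω (x, y) * ω' (y, z) / ν y := sum_comm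
    _ = ∑ y, ω (x, y) := by simp only [← sum_div, ← mul_sum, h'.2.1, cancel]
    _ = μ x := h.2.1 x

theorem IsCoupling.glue (h : IsCoupling ω μ ν) (h' : IsCoupling ω' ν κ) :
    IsCoupling (gluing ν ω ω') μ κ := by
  refine .of_marginals h.isDist_left
    (fun p => sum_nonneg fun y _ =>
      div_nonneg (mul_nonneg (h.1.1 _) (h'.1.1 _)) (h'.isDist_left.1 y))
    (h.sum_gluing h') fun z => ?_
  have := h'.swap.sum_gluing h.swap z
  rwa [← gluing_comp_swap] at this

theorem IsCoupling.psupp_gluing (h : IsCoupling ω μ ν) (h' : IsCoupling ω' ν κ) :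
    psupp (gluing ν ω ω') = psupp ω ○ psupp ω' := by
  have hν := h'.isDist_left.1
  ext ⟨x, z⟩
  have hnonneg (y : X) (_ : y ∈ univ) : 0 ≤ ω (x, y) * ω' (y, z) / ν y :=
    div_nonneg (mul_nonneg (h.1.1 _) (h'.1.1 _)) (hν y)
  refine (sum_pos_iff_of_nonneg hnonneg).trans ⟨?_, ?_⟩
  · rintro ⟨y, -, hy⟩
    refine ⟨y, (h.1.1 _).lt_of_ne' fun h0 => ?_, (h'.1.1 _).lt_of_ne' fun h0 => ?_⟩ <;>
      simp [h0] at hy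
  · rintro ⟨y, hxy, hyz⟩
    exact ⟨y, mem_univ y, div_pos (mul_pos hxy hyz) (hxy.trans_le (h.apply_le_right (x, y)))⟩

theorem IsDist.eq_of_sum_mul_le {f : X → ℝ} {m : ℝ} (hμ : IsDist μ)
    (hf : ∀ x ∈ psupp μ, m ≤ f x) (hsum : ∑ x, μ x * f x ≤ m) {x : X} (hx : x ∈ psupp μ) :
    f x = m := by
  have hnonneg : ∀ x ∈ univ, 0 ≤ μ x * (f x - m) := fun x _ => by
    rcases (hμ.1 x).eq_or_lt with h0 | hpos
    · simp [← h0]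
    · exact mul_nonneg hpos.le (sub_nonneg.mpr (hf x hpos))
  have hsum' : ∑ x, μ x * (f x - m) ≤ 0 := by
    simpa [mul_sub, ← sum_mul, hμ.2] using hsum
  have hzero := (sum_eq_zero_iff_of_nonneg hnonneg).mp (hsum'.antisymm (sum_nonneg hnonneg))
  exact sub_eq_zero.mp ((mul_eq_zero.mp (hzero x (mem_univ x))).resolve_left (ne_of_gt hx))

end Coupling

section BisimStep

variable {S L : Type*} [Fintype S] {ℓ : S → L} {τ : S → S → ℝ} {R R' : SetRel S S}

theorem sDelta_subset_iff {S : Type*} {R : SetRel S S} :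
    SDelta S ⊆ R ↔ ∀ s, (s, s) ∈ R := by
  refine ⟨fun h _ => h rfl, fun h => ?_⟩
  rintro ⟨s, t⟩ (rfl : s = t)
  exact h s

theorem sDelta_subset_inv {S : Type*} {R : SetRel S S} (hR : SDelta S ⊆ R) : SDelta S ⊆ R.inv :=
  sDelta_subset_iff.mpr fun _ => hR rfl

/-- The functional whose post-fixed equivalence relations are the probabilistic bisimulations:
`p ∈ bisimStep ℓ τ R` if the two states of `p` have equal labels and their transition distributions
have a coupling supported in `R`. -/
def bisimStep (ℓ : S → L) (τ : S → S → ℝ) (R : Set (S × S)) : SetRel S S :=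
  {p | ℓ p.1 = ℓ p.2 ∧ ∃ ω, IsCoupling ω (τ p.1) (τ p.2) ∧ psupp ω ⊆ R}

theorem bisimStep_mono (h : R ⊆ R') : bisimStep ℓ τ R ⊆ bisimStep ℓ τ R' :=
  fun _ ⟨hlabel, ω, hω, hsupp⟩ => ⟨hlabel, ω, hω, hsupp.trans h⟩

theorem sDelta_subset_bisimStep (hτ : IsTransFn τ) (hR : SDelta S ⊆ R) :
    SDelta S ⊆ bisimStep ℓ τ R := by
  refine sDelta_subset_iff.mpr fun s => ?_
  obtain ⟨ω, hω, hsupp⟩ := (hτ s).exists_isCoupling_self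
  exact ⟨rfl, ω, hω, hsupp.trans hR⟩

theorem inv_bisimStep_subset : (bisimStep ℓ τ R).inv ⊆ bisimStep ℓ τ R.inv :=
  fun _ ⟨hlabel, _, hω, hsupp⟩ => ⟨hlabel.symm, _, hω.swap, SetRel.inv_mono hsupp⟩

theorem bisimStep_comp_subset :
    bisimStep ℓ τ R ○ bisimStep ℓ τ R' ⊆ bisimStep ℓ τ (R ○ R') := by
  rintro ⟨s, u⟩ ⟨t, ⟨hst, ω, hω, hsupp⟩, htu, ω', hω', hsupp'⟩
  refine ⟨hst.trans htu, _, hω.glue hω', ?_⟩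
  rw [hω.psupp_gluing hω']
  exact SetRel.comp_subset_comp hsupp hsupp'

theorem equivalence_bisimStep (hτ : IsTransFn τ) (hR : Equivalence fun s t => (s, t) ∈ R) :
    Equivalence fun s t => (s, t) ∈ bisimStep ℓ τ R where
  refl s := sDelta_subset_bisimStep hτ (sDelta_subset_iff.mpr hR.refl) (rfl : s = s)
  symm h := bisimStep_mono (fun _ hp => hR.symm hp) (inv_bisimStep_subset h)
  trans h h' :=
    have hRR : R ○ R ⊆ R := fun _ ⟨_, hp, hp'⟩ => hR.trans hp hp'
    bisimStep_mono hRR (bisimStep_comp_subset (SetRel.prodMk_mem_comp h h'))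

theorem Bisimilar.trans (hτ : IsTransFn τ) {s t u : S} (hst : Bisimilar ℓ τ s t)
    (htu : Bisimilar ℓ τ t u) : Bisimilar ℓ τ s u := by
  obtain ⟨B, hB, hst⟩ := hst
  obtain ⟨B', hB', htu⟩ := htu
  let r : Setoid S := ⟨_, hB.1⟩
  let r' : Setoid S := ⟨_, hB'.1⟩
  let join : SetRel S S := {p | (r ⊔ r') p.1 p.2}
  have hBjoin : B ⊆ join := fun p hp => (le_sup_left : r ≤ r ⊔ r') hp
  have hBjoin' : B' ⊆ join := fun p hp => (le_sup_right : r' ≤ r ⊔ r') hp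
  have hjoin : r ⊔ r' ≤ ⟨_, equivalence_bisimStep (ℓ := ℓ) hτ (R := join) (r ⊔ r').iseqv⟩ :=
    sup_le (fun _ _ h => bisimStep_mono hBjoin (hB.2 _ h))
      (fun _ _ h => bisimStep_mono hBjoin' (hB'.2 _ h))
  have hst' : (r ⊔ r') s t := hBjoin hst
  have htu' : (r ⊔ r') t u := hBjoin' htu
  exact ⟨join, ⟨(r ⊔ r').iseqv, fun _ h => hjoin h⟩, (r ⊔ r').trans hst' htu'⟩

end BisimStep

section Filter

variable {S L : Type*} [Fintype S] {ℓ : S → L} {τ : S → S → ℝ} {R R' A B : SetRel S S}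

/-- `DrivesToDiag ℓ τ R n p`: starting from `p`, suitable couplings supported in `R` reach the
diagonal with positive probability in exactly `n` steps. Unlike in the definition of `Filter(R)`,
the coupling is chosen anew at each step and no policy on all of `S × S` is involved. -/
inductive DrivesToDiag (ℓ : S → L) (τ : S → S → ℝ) (R : Set (S × S)) : ℕ → S × S → Prop
  | diag {p : S × S} {ω : S × S → ℝ} (hp : p ∈ R) (hdiag : p ∈ SDelta S)
      (hω : IsCoupling ω (τ p.1) (τ p.2)) (hsupp : psupp ω ⊆ R) : DrivesToDiag ℓ τ R 0 p
  | step {n : ℕ} {p q : S × S} {ω : S × S → ℝ} (hp : p ∈ R) (hlabel : ℓ p.1 = ℓ p.2)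
      (hω : IsCoupling ω (τ p.1) (τ p.2)) (hsupp : psupp ω ⊆ R) (hq : q ∈ psupp ω)
      (h : DrivesToDiag ℓ τ R n q) : DrivesToDiag ℓ τ R (n + 1) p

namespace DrivesToDiag

variable {n : ℕ} {p : S × S}

theorem mem (h : DrivesToDiag ℓ τ R n p) : p ∈ R := by
  cases h <;> assumption

theorem mem_bisimStep (h : DrivesToDiag ℓ τ R n p) : p ∈ bisimStep ℓ τ R := by
  cases h with
  | diag _ hdiag hω hsupp => exact ⟨congrArg ℓ hdiag, _, hω, hsupp⟩
  | step _ hlabel hω hsupp => exact ⟨hlabel, _, hω, hsupp⟩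

theorem of_mem_sDelta (hτ : IsTransFn τ) (hR : SDelta S ⊆ R) (hp : p ∈ SDelta S) :
    DrivesToDiag ℓ τ R 0 p := by
  obtain ⟨_, ω, hω, hsupp⟩ := sDelta_subset_bisimStep (ℓ := ℓ) hτ hR hp
  exact .diag (hR hp) hp hω hsupp

theorem mono (hR : R ⊆ R') (h : DrivesToDiag ℓ τ R n p) : DrivesToDiag ℓ τ R' n p := by
  induction h with
  | diag hp hdiag hω hsupp => exact .diag (hR hp) hdiag hω (hsupp.trans hR)
  | step hp hlabel hω hsupp hq _ ih => exact .step (hR hp) hlabel hω (hsupp.trans hR) hq ih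

theorem swap (h : DrivesToDiag ℓ τ R n p) : DrivesToDiag ℓ τ R.inv n p.swap := by
  induction h with
  | diag hp hdiag hω hsupp => exact .diag hp hdiag.symm hω.swap (SetRel.inv_mono hsupp)
  | step hp hlabel hω hsupp hq _ ih =>
    exact .step hp hlabel.symm hω.swap (SetRel.inv_mono hsupp) hq ih

theorem comp (hA : SDelta S ⊆ A) (hBstep : B ⊆ bisimStep ℓ τ B)
    (hB : ∀ p ∈ B, ∃ n, DrivesToDiag ℓ τ B n p) (h : DrivesToDiag ℓ τ A n p) :
    ∀ {u}, (p.2, u) ∈ B → ∃ m, DrivesToDiag ℓ τ (A ○ B) m (p.1, u) := by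
  induction h with
  | @diag p _ _ hdiag =>
    intro u hu
    obtain ⟨m, hm⟩ := hB _ ((show p.1 = p.2 from hdiag) ▸ hu)
    exact ⟨m, hm.mono fun q hq => ⟨q.1, hA rfl, hq⟩⟩
  | @step _ p q ω hp hlabel hω hsupp hq _ ih =>
    intro u hu
    obtain ⟨hlabel', ω', hω', hsupp'⟩ := hBstep hu
    obtain ⟨v, hv⟩ := hω'.exists_mem_psupp (lt_of_lt_of_le hq (hω.apply_le_right q))
    obtain ⟨m, hm⟩ := ih (hsupp' hv)
    have hglue := hω.psupp_gluing hω'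
    refine ⟨m + 1, .step ⟨p.2, hp, hu⟩ (hlabel.trans hlabel') (hω.glue hω') ?_ ?_ hm⟩
    · exact hglue ▸ SetRel.comp_subset_comp hsupp hsupp'
    · exact hglue ▸ ⟨q.2, hq, hv⟩

/-- Driving along the shortest possible route is what lets a memoryless policy make progress. -/
theorem exists_coupling_decreasing (h : ∃ n, DrivesToDiag ℓ τ R n p) :
    ∃ ω, IsCoupling ω (τ p.1) (τ p.2) ∧ psupp ω ⊆ R ∧ (p ∈ SDelta S ∨
      ∀ n, DrivesToDiag ℓ τ R n p → ∃ m < n, ∃ q ∈ psupp ω, DrivesToDiag ℓ τ R m q) := by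
  have hmin (n : ℕ) (hn : DrivesToDiag ℓ τ R n p) : Nat.find h ≤ n := Nat.find_min' h hn
  generalize hk : Nat.find h = k at hmin
  have hspec : DrivesToDiag ℓ τ R k p := hk ▸ Nat.find_spec h
  cases hspec with
  | diag _ hdiag hω hsupp => exact ⟨_, hω, hsupp, .inl hdiag⟩
  | @step m _ q ω _ _ hω hsupp hq hm =>
    exact ⟨ω, hω, hsupp, .inr fun n hn => ⟨m, hmin n hn, q, hq, hm⟩⟩

end DrivesToDiag

theorem exists_isPolicy_eqOn (hτ : IsTransFn τ) {D : Set (S × S)}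
    {ω : S × S → S × S → ℝ} (hlabel : ∀ p ∈ D, ℓ p.1 = ℓ p.2)
    (hω : ∀ p ∈ D, IsCoupling (ω p) (τ p.1) (τ p.2)) :
    ∃ P, IsPolicy ℓ τ P ∧ Set.EqOn P ω D := by
  have extend (p : S × S) : ∃ d : S × S → ℝ, IsDist d ∧
      (ℓ p.1 = ℓ p.2 → IsCoupling d (τ p.1) (τ p.2)) ∧
      (ℓ p.1 ≠ ℓ p.2 → psupp d = {p}) ∧ (p ∈ D → d = ω p) := by
    by_cases hp : p ∈ D
    · exact ⟨ω p, (hω p hp).1, fun _ => hω p hp, absurd (hlabel p hp), fun _ => rfl⟩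
    by_cases hl : ℓ p.1 = ℓ p.2
    · have hprod := (hτ p.1).isCoupling_mul (hτ p.2)
      exact ⟨_, hprod.1, fun _ => hprod, absurd hl, fun h => absurd h hp⟩
    · refine ⟨Pi.single p 1, ⟨fun q => ?_, by simp⟩, fun h => absurd h hl, fun _ => ?_,
        fun h => absurd h hp⟩
      · exact (Pi.single_nonneg.mpr zero_le_one : (0 : S × S → ℝ) ≤ Pi.single p 1) q
      · ext q
        by_cases hq : q = p <;> simp [psupp, hq]
  choose P hdist hcoupling hloop hD using extend
  exact ⟨P, ⟨hdist, hcoupling, hloop⟩, hD⟩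

theorem exists_isPolicy_supportsPathToDelta (hτ : IsTransFn τ) (R : SetRel S S) :
    ∃ P, IsPolicy ℓ τ P ∧ ∀ n p, DrivesToDiag ℓ τ R n p → SupportsPathToDelta P R p := by
  choose! ω hω hsupp hdecr using fun p (h : ∃ n, DrivesToDiag ℓ τ R n p) =>
    DrivesToDiag.exists_coupling_decreasing h
  obtain ⟨P, hP, hPω⟩ := exists_isPolicy_eqOn (ℓ := ℓ) hτ
    (D := {p | ∃ n, DrivesToDiag ℓ τ R n p}) (fun _ ⟨_, hn⟩ => hn.mem_bisimStep.1) hω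
  have hsuppP {n p} (hp : DrivesToDiag ℓ τ R n p) : psupp (P p) ⊆ R :=
    hPω ⟨n, hp⟩ ▸ hsupp p ⟨n, hp⟩
  refine ⟨P, hP, fun n => ?_⟩
  induction n using Nat.strong_induction_on with
  | _ n ih =>
    intro p hp
    rcases hdecr p ⟨n, hp⟩ with hdiag | hdecr
    · exact ⟨p, hdiag, .refl, hp.mem, hsuppP hp⟩
    · obtain ⟨m, hmn, q, hq, hm⟩ := hdecr n hp
      obtain ⟨r, hr, hpath, hrR⟩ := ih m hmn q hm
      have hpq : 0 < P p q := by rw [hPω ⟨n, hp⟩]; exact hq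
      exact ⟨r, hr, .head ⟨hp.mem, hsuppP hp, hpq⟩ hpath, hrR⟩

/-- A pair with distinct labels only has a self-loop, so a step out of it can be dropped. -/
theorem exists_drivesToDiag_of_mem_psupp {P : S × S → S × S → ℝ} (hP : IsPolicy ℓ τ P)
    {p q : S × S} (hp : p ∈ R) (hsupp : psupp (P p) ⊆ R) (hq : q ∈ psupp (P p))
    (h : ∃ n, DrivesToDiag ℓ τ R n q) : ∃ n, DrivesToDiag ℓ τ R n p := by
  obtain ⟨n, hn⟩ := h
  by_cases hlabel : ℓ p.1 = ℓ p.2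
  · exact ⟨n + 1, .step hp hlabel (hP.2.1 p hlabel) hsupp hq hn⟩
  · rw [hP.2.2 p hlabel, Set.mem_singleton_iff] at hq
    exact ⟨n, hq ▸ hn⟩

theorem exists_drivesToDiag_of_mem_filterFn {p : S × S} (h : p ∈ FilterFn ℓ τ R) :
    ∃ n, DrivesToDiag ℓ τ R n p := by
  obtain ⟨-, P, hP, q, hq, hpath, hqR, hsupp⟩ := h
  induction hpath using Relation.ReflTransGen.head_induction_on with
  | refl => exact ⟨0, .diag hqR hq (hP.2.1 q (congrArg ℓ hq)) hsupp⟩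
  | head hstep _ ih => exact exists_drivesToDiag_of_mem_psupp hP hstep.1 hstep.2.1 hstep.2.2 ih

theorem mem_filterFn_iff (hτ : IsTransFn τ) {p : S × S} :
    p ∈ FilterFn ℓ τ R ↔ ∃ n, DrivesToDiag ℓ τ R n p := by
  refine ⟨exists_drivesToDiag_of_mem_filterFn, fun ⟨n, hn⟩ => ?_⟩
  obtain ⟨P, hP, hpath⟩ := exists_isPolicy_supportsPathToDelta (ℓ := ℓ) hτ R
  exact ⟨hn.mem, P, hP, hpath n p hn⟩

theorem sDelta_subset_filterFn (hτ : IsTransFn τ) (hR : SDelta S ⊆ R) :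
    SDelta S ⊆ FilterFn ℓ τ R :=
  fun _ hp => (mem_filterFn_iff hτ).mpr ⟨0, .of_mem_sDelta hτ hR hp⟩

theorem filterFn_subset_bisimStep : FilterFn ℓ τ R ⊆ bisimStep ℓ τ R := fun _ hp =>
  (exists_drivesToDiag_of_mem_filterFn hp).elim fun _ => DrivesToDiag.mem_bisimStep

theorem filterFn_mono (h : R ⊆ R') : FilterFn ℓ τ R ⊆ FilterFn ℓ τ R' :=
  fun _ ⟨hp, P, hP, q, hq, hpath, hqR, hsupp⟩ =>
    have hstep (a b) (hab : SupStep P R a b) : SupStep P R' a b :=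
      ⟨h hab.1, hab.2.1.trans h, hab.2.2⟩
    ⟨h hp, P, hP, q, hq, Relation.ReflTransGen.mono hstep _ _ hpath, h hqR, hsupp.trans h⟩

theorem inv_filterFn_subset (hτ : IsTransFn τ) :
    SetRel.inv (FilterFn ℓ τ R) ⊆ FilterFn ℓ τ R.inv := fun _ hp =>
  (mem_filterFn_iff hτ).mpr <|
    (exists_drivesToDiag_of_mem_filterFn hp).imp fun _ => DrivesToDiag.swap

theorem filterFn_comp_subset (hτ : IsTransFn τ) (hA : SDelta S ⊆ A) (hB : B ⊆ FilterFn ℓ τ B) :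
    FilterFn ℓ τ A ○ B ⊆ FilterFn ℓ τ (A ○ B) := by
  rintro ⟨s, u⟩ ⟨t, hst, htu⟩
  obtain ⟨n, hn⟩ := exists_drivesToDiag_of_mem_filterFn hst
  exact (mem_filterFn_iff hτ).mpr <| hn.comp hA (hB.trans filterFn_subset_bisimStep)
    (fun _ hp => exists_drivesToDiag_of_mem_filterFn (hB hp)) htu

theorem comp_filterFn_subset (hτ : IsTransFn τ) (hA : SDelta S ⊆ A) (hB : B ⊆ FilterFn ℓ τ B) :
    B ○ FilterFn ℓ τ A ⊆ FilterFn ℓ τ (B ○ A) := by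
  have hBinv : B.inv ⊆ FilterFn ℓ τ B.inv := (SetRel.inv_mono hB).trans (inv_filterFn_subset hτ)
  rintro ⟨s, u⟩ ⟨t, hst, htu⟩
  have hus : (u, s) ∈ FilterFn ℓ τ (A.inv ○ B.inv) :=
    filterFn_comp_subset hτ (sDelta_subset_inv hA) hBinv ⟨t, inv_filterFn_subset hτ htu, hst⟩
  have hsu : (s, u) ∈ FilterFn ℓ τ (A.inv ○ B.inv).inv := inv_filterFn_subset hτ hus
  rwa [SetRel.inv_comp, SetRel.inv_inv, SetRel.inv_inv] at hsu

end Filter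

section LeastFixedPoint

variable {A : Type*} {F : (A → ℝ) → A → ℝ}

theorem exists_isLfpOn_forall_le (h01 : ∀ d, Is01 d → Is01 (F d))
    (hmono : ∀ d e, Is01 d → Is01 e → d ≤ e → F d ≤ F e) :
    ∃ d, IsLfpOn F d ∧ ∀ e, Is01 e → F e ≤ e → d ≤ e := by
  let val (d : A → Set.Icc (0 : ℝ) 1) (a : A) : ℝ := d a
  have hval (d : A → Set.Icc (0 : ℝ) 1) : Is01 (val d) := fun a => (d a).2
  let G : (A → Set.Icc (0 : ℝ) 1) →o (A → Set.Icc (0 : ℝ) 1) :=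
    ⟨fun d a => ⟨F (val d) a, h01 _ (hval d) a⟩, fun d e hde => hmono _ _ (hval d) (hval e) hde⟩
  have hle (e : A → ℝ) (he : Is01 e) (hFe : F e ≤ e) : val G.lfp ≤ e :=
    G.lfp_le (a := fun a => ⟨e a, he a⟩) hFe
  have hfix : F (val G.lfp) = val G.lfp := congrArg val G.map_lfp
  exact ⟨val G.lfp, ⟨hval _, hfix, fun e he hFe => hle e he hFe.le⟩, hle⟩

theorem IsLfpOn.le_of_map_le (h01 : ∀ d, Is01 d → Is01 (F d))
    (hmono : ∀ d e, Is01 d → Is01 e → d ≤ e → F d ≤ F e) {d e : A → ℝ} (hd : IsLfpOn F d)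
    (he : Is01 e) (hFe : F e ≤ e) : d ≤ e := by
  obtain ⟨d', hd', hle⟩ := exists_isLfpOn_forall_le h01 hmono
  exact le_trans (hd.2.2 d' hd'.1 hd'.2.1) (hle e he hFe)

end LeastFixedPoint

section Reachability

variable {S : Type*} [Fintype S] {P : S × S → S × S → ℝ} {d e ρ : S × S → ℝ} {p : S × S}

theorem reachF_of_mem_sDelta (hp : p ∈ SDelta S) : ReachF P e p = 1 := if_pos hp

theorem reachF_of_notMem_sDelta (hp : p ∉ SDelta S) : ReachF P e p = ∑ q, P p q * e q := if_neg hp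

theorem Is01.reachF (hP : ∀ p, IsDist (P p)) (he : Is01 e) : Is01 (ReachF P e) := fun p => by
  by_cases hp : p ∈ SDelta S
  · simp [reachF_of_mem_sDelta hp]
  · rw [reachF_of_notMem_sDelta hp]
    refine ⟨sum_nonneg fun q _ => mul_nonneg ((hP p).1 q) (he q).1, ?_⟩
    exact (hP p).2 ▸ sum_le_sum fun q _ => mul_le_of_le_one_right ((hP p).1 q) (he q).2

theorem reachF_mono (hP : ∀ p, IsDist (P p)) (hde : d ≤ e) : ReachF P d ≤ ReachF P e := fun p => by
  by_cases hp : p ∈ SDelta S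
  · simp [reachF_of_mem_sDelta hp]
  · simp only [reachF_of_notMem_sDelta hp]
    exact sum_le_sum fun q _ => mul_le_mul_of_nonneg_left (hde q) ((hP p).1 q)

theorem exists_isLfpOn_reachF (hP : ∀ p, IsDist (P p)) : ∃ ρ, IsLfpOn (ReachF P) ρ :=
  (exists_isLfpOn_forall_le (fun _ => Is01.reachF hP) fun _ _ _ _ => reachF_mono hP).imp
    fun _ => And.left

/-- The indicator of the pairs that can reach the diagonal is a pre-fixed point of `ReachF P`. -/
theorem exists_reach_of_pos (hP : ∀ p, IsDist (P p)) (hρ : IsLfpOn (ReachF P) ρ)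
    (hp : 0 < ρ p) : ∃ q ∈ SDelta S, Reach P p q := by
  let W : Set (S × S) := {p | ∃ q ∈ SDelta S, Reach P p q}
  have hind01 : Is01 (W.indicator (1 : S × S → ℝ)) := fun p => by
    by_cases hp : p ∈ W <;> simp [hp]
  have hind : ReachF P (W.indicator 1) ≤ W.indicator 1 := fun p => by
    by_cases hpW : p ∈ W
    · simpa [hpW] using (hind01.reachF hP p).2
    have hdiag : p ∉ SDelta S := fun hdiag => hpW ⟨p, hdiag, .refl⟩
    rw [reachF_of_notMem_sDelta hdiag, Set.indicator_of_notMem hpW]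
    refine sum_nonpos fun q _ => ?_
    rcases ((hP p).1 q).eq_or_lt with hq | hq
    · simp [← hq]
    · have hqW : q ∉ W := fun ⟨r, hr, hqr⟩ => hpW ⟨r, hr, .head hq hqr⟩
      simp [hqW]
  by_contra hpW
  have hle :=
    hρ.le_of_map_le (fun _ => Is01.reachF hP) (fun _ _ _ _ => reachF_mono hP) hind01 hind p
  rw [Set.indicator_of_notMem (show p ∉ W from hpW)] at hle
  exact hle.not_gt hp

theorem eq_one_of_mem_psupp (hP : ∀ p, IsDist (P p)) (hρ01 : Is01 ρ) (hρ : ReachF P ρ = ρ)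
    (hp : ρ p = 1) (hdiag : p ∉ SDelta S) {q : S × S} (hq : q ∈ psupp (P p)) : ρ q = 1 := by
  have hsum : ∑ q, P p q * -ρ q ≤ -1 := by
    rw [← hρ, reachF_of_notMem_sDelta hdiag] at hp
    simp [hp]
  exact neg_inj.mp ((hP p).eq_of_sum_mul_le (fun q _ => neg_le_neg (hρ01 q).2) hsum hq)

theorem one_le_of_supportsPathToDelta (hP : ∀ p, IsDist (P p)) (hρ : ReachF P ρ = ρ)
    {R : Set (S × S)} (hR : ∀ p ∈ R, SupportsPathToDelta P R p) (hp : p ∈ R) : 1 ≤ ρ p := by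
  obtain ⟨p₀, hp₀, hmin⟩ := R.exists_min_image ρ R.toFinite ⟨p, hp⟩
  have hone {a} (ha : a ∈ SDelta S) : ρ a = 1 := by rw [← hρ, reachF_of_mem_sDelta ha]
  obtain ⟨q, hq, hpath, -⟩ := hR p₀ hp₀
  have hpath_min : ∀ a, Relation.ReflTransGen (SupStep P R) a q → ρ a = ρ p₀ → ρ p₀ = 1 := by
    intro a ha
    induction ha using Relation.ReflTransGen.head_induction_on with
    | refl => exact fun hqmin => hqmin ▸ hone hq
    | @head a b hab _ ih =>
      intro hamin
      by_cases hdiag : a ∈ SDelta S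
      · exact hamin ▸ hone hdiag
      · refine ih ((hP a).eq_of_sum_mul_le (fun c hc => hmin c (hab.2.1 hc)) ?_ hab.2.2)
        rw [← reachF_of_notMem_sDelta hdiag, hρ, hamin]
  exact hpath_min p₀ hpath rfl ▸ hmin p hp

end Reachability

section Robust

variable {S L : Type*} [Fintype S] {ℓ : S → L} {τ : S → S → ℝ} {U V : SetRel S S}

/-- Robust probabilistic bisimilarity `≃` as a set of pairs. -/
def robustBisimilarity (ℓ : S → L) (τ : S → S → ℝ) : SetRel S S :=
  {p | Robust ℓ τ p.1 p.2}

theorem subset_robustBisimilarity (hτ : IsTransFn τ) (hU : U ⊆ FilterFn ℓ τ U) :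
    U ⊆ robustBisimilarity ℓ τ := by
  obtain ⟨P, hP, hpath⟩ := exists_isPolicy_supportsPathToDelta (ℓ := ℓ) hτ U
  have hpathU (p) (hp : p ∈ U) : SupportsPathToDelta P U p := by
    obtain ⟨n, hn⟩ := exists_drivesToDiag_of_mem_filterFn (hU hp)
    exact hpath n p hn
  obtain ⟨ρ, hρ⟩ := exists_isLfpOn_reachF hP.1
  exact fun p hp => ⟨P, ρ, hP, hρ,
    (hρ.1 p).2.antisymm (one_le_of_supportsPathToDelta hP.1 hρ.2.1 hpathU hp)⟩

theorem sDelta_subset_robustBisimilarity (hτ : IsTransFn τ) :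
    SDelta S ⊆ robustBisimilarity ℓ τ :=
  subset_robustBisimilarity hτ (sDelta_subset_filterFn hτ subset_rfl)

theorem exists_drivesToDiag_robustBisimilarity (hτ : IsTransFn τ) {p : S × S}
    (hp : p ∈ robustBisimilarity ℓ τ) : ∃ n, DrivesToDiag ℓ τ (robustBisimilarity ℓ τ) n p := by
  obtain ⟨P, ρ, hP, hρ, hp⟩ := hp
  have hmem {a} (ha : ρ a = 1) : a ∈ robustBisimilarity ℓ τ := ⟨P, ρ, hP, hρ, ha⟩
  change ρ p = 1 at hp
  have hrefl := sDelta_subset_robustBisimilarity (ℓ := ℓ) hτ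
  obtain ⟨q, hq, hpath⟩ := exists_reach_of_pos hP.1 hρ (zero_lt_one.trans_eq hp.symm)
  induction hpath using Relation.ReflTransGen.head_induction_on with
  | refl => exact ⟨0, .of_mem_sDelta hτ hrefl hq⟩
  | @head a b hab _ ih =>
    by_cases hdiag : a ∈ SDelta S
    · exact ⟨0, .of_mem_sDelta hτ hrefl hdiag⟩
    · have hone {c} (hc : c ∈ psupp (P a)) : ρ c = 1 :=
        eq_one_of_mem_psupp hP.1 hρ.1 hρ.2.1 hp hdiag hc
      exact exists_drivesToDiag_of_mem_psupp hP (hmem hp) (fun c hc => hmem (hone hc)) hab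
        (ih (hone hab))

theorem robustBisimilarity_subset_filterFn (hτ : IsTransFn τ) :
    robustBisimilarity ℓ τ ⊆ FilterFn ℓ τ (robustBisimilarity ℓ τ) := fun _ hp =>
  (mem_filterFn_iff hτ).mpr (exists_drivesToDiag_robustBisimilarity hτ hp)

theorem inv_robustBisimilarity_subset (hτ : IsTransFn τ) :
    (robustBisimilarity ℓ τ).inv ⊆ robustBisimilarity ℓ τ :=
  subset_robustBisimilarity hτ <|
    (SetRel.inv_mono (robustBisimilarity_subset_filterFn hτ)).trans (inv_filterFn_subset hτ)

theorem robustBisimilarity_comp_subset (hτ : IsTransFn τ) :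
    robustBisimilarity ℓ τ ○ robustBisimilarity ℓ τ ⊆ robustBisimilarity ℓ τ := by
  have hrefl := sDelta_subset_robustBisimilarity (ℓ := ℓ) hτ
  have hfilter := robustBisimilarity_subset_filterFn (ℓ := ℓ) hτ
  exact subset_robustBisimilarity hτ <|
    (SetRel.comp_subset_comp_left hfilter).trans (filterFn_comp_subset hτ hrefl hfilter)

theorem isBisim_robustBisimilarity (hτ : IsTransFn τ) : IsBisim ℓ τ (robustBisimilarity ℓ τ) :=
  ⟨⟨fun s => sDelta_subset_robustBisimilarity hτ (rfl : s = s),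
    fun h => inv_robustBisimilarity_subset hτ h,
    fun h h' => robustBisimilarity_comp_subset hτ ⟨_, h, h'⟩⟩,
    (robustBisimilarity_subset_filterFn hτ).trans filterFn_subset_bisimStep⟩

theorem subset_pruneFn {S : Type*} {B Q : SetRel S S} (hBQ : B ⊆ Q) (hleft : B ○ Q ⊆ Q)
    (hright : Q ○ B ⊆ Q) : B ⊆ PruneFn Q :=
  fun p hp => ⟨hBQ hp, fun _ => ⟨fun h => hleft ⟨p.2, hp, h⟩, fun h => hright ⟨p.1, h, hp⟩⟩⟩

theorem pruneFn_filterFn_subset : PruneFn (FilterFn ℓ τ U) ⊆ U := fun _ hp => hp.1.1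

theorem robustBisimilarity_subset_pruneFn_filterFn (hτ : IsTransFn τ) (hV : V ○ V ⊆ V)
    (hsub : robustBisimilarity ℓ τ ⊆ V) :
    robustBisimilarity ℓ τ ⊆ PruneFn (FilterFn ℓ τ V) := by
  have hrefl := sDelta_subset_robustBisimilarity (ℓ := ℓ) hτ
  have hfilter := robustBisimilarity_subset_filterFn (ℓ := ℓ) hτ
  have hreflV := hrefl.trans hsub
  refine subset_pruneFn (hfilter.trans (filterFn_mono hsub)) ?_ ?_
  · exact (comp_filterFn_subset hτ hreflV hfilter).trans <|
      filterFn_mono ((SetRel.comp_subset_comp_left hsub).trans hV)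
  · exact (filterFn_comp_subset hτ hreflV hfilter).trans <|
      filterFn_mono ((SetRel.comp_subset_comp_right hsub).trans hV)

theorem isGreatestBisimIn_robustBisimilarity (hτ : IsTransFn τ) :
    IsGreatestBisimIn ℓ τ (PruneFn (FilterFn ℓ τ (robustBisimilarity ℓ τ)))
      (robustBisimilarity ℓ τ) :=
  ⟨isBisim_robustBisimilarity hτ,
    robustBisimilarity_subset_pruneFn_filterFn hτ (robustBisimilarity_comp_subset hτ) subset_rfl,
    fun _ _ h => h.trans pruneFn_filterFn_subset⟩

end Robust

section Iteration

variable {S L : Type*} [Fintype S] {ℓ : S → L} {τ : S → S → ℝ} {R : ℕ → SetRel S S}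

theorem robustBisimilarity_subset_iterate (hτ : IsTransFn τ) (hsub : robustBisimilarity ℓ τ ⊆ R 0)
    (htrans : R 0 ○ R 0 ⊆ R 0)
    (hstep : ∀ n, IsGreatestBisimIn ℓ τ (PruneFn (FilterFn ℓ τ (R n))) (R (n + 1))) (n : ℕ) :
    robustBisimilarity ℓ τ ⊆ R n := by
  have hRtrans : ∀ n, R n ○ R n ⊆ R n
    | 0 => htrans
    | n + 1 => fun _ ⟨_, h, h'⟩ => (hstep n).1.1.trans h h'
  induction n with
  | zero => exact hsub
  | succ n ih =>
    exact (hstep n).2.2 _ (isBisim_robustBisimilarity hτ)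
      (robustBisimilarity_subset_pruneFn_filterFn hτ (hRtrans n) ih)

theorem algorithm_computes_robust_bisimilarity_general (hτ : IsTransFn τ)
    (hsub : robustBisimilarity ℓ τ ⊆ R 0) (htrans : R 0 ○ R 0 ⊆ R 0)
    (hstep : ∀ n, IsGreatestBisimIn ℓ τ (PruneFn (FilterFn ℓ τ (R n))) (R (n + 1))) :
    (∀ n, R (n + 1) ⊆ R n) ∧
    (∃ n, R (n + 1) = R n ∧ R n = robustBisimilarity ℓ τ) ∧
    (∀ R', IsGreatestBisimIn ℓ τ (PruneFn (FilterFn ℓ τ R')) R' → R' ⊆ robustBisimilarity ℓ τ) ∧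
    IsGreatestBisimIn ℓ τ
      (PruneFn (FilterFn ℓ τ (robustBisimilarity ℓ τ))) (robustBisimilarity ℓ τ) := by
  have hdecr (n : ℕ) : R (n + 1) ⊆ R n := (hstep n).2.1.trans pruneFn_filterFn_subset
  have hfixed (R') (hR' : IsGreatestBisimIn ℓ τ (PruneFn (FilterFn ℓ τ R')) R') :
      R' ⊆ robustBisimilarity ℓ τ :=
    subset_robustBisimilarity hτ fun _ hp => (hR'.2.1 hp).1
  obtain ⟨n, hn⟩ : ∃ n, R (n + 1) = R n := by
    obtain ⟨n, hn⟩ := WellFoundedLT.antitone_chain_condition (antitone_nat_of_succ_le hdecr)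
    exact ⟨n, (hn (n + 1) n.le_succ).symm⟩
  have hRn : R n = robustBisimilarity ℓ τ :=
    (hfixed _ (by simpa only [hn] using hstep n)).antisymm
      (robustBisimilarity_subset_iterate hτ hsub htrans hstep n)
  exact ⟨hdecr, ⟨n, hn, hRn⟩, hfixed, isGreatestBisimIn_robustBisimilarity hτ⟩

end Iteration

/-- Theorem 19: the iteration `R₀ = ∼`, `R_{n+1} = Refine(R_n)` is decreasing, stabilizes,
and its eventual fixed point is robust probabilistic bisimilarity `≃`; moreover `≃` is the
greatest fixed point of `Refine`. -/
theorem algorithm_computes_robust_bisimilarity {S L : Type*} [Fintype S] [Nonempty S]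
    [Fintype L]
    (ℓ : S → L) (hℓ : ∃ a b : S, ℓ a ≠ ℓ b)
    (τ : S → S → ℝ) (hτ : IsTransFn τ)
    (R : ℕ → Set (S × S))
    (hR0 : R 0 = {p : S × S | Bisimilar ℓ τ p.1 p.2})
    (hstep : ∀ n, IsGreatestBisimIn ℓ τ (PruneFn (FilterFn ℓ τ (R n))) (R (n + 1))) :
    (∀ n, R (n + 1) ⊆ R n) ∧
    (∃ n, R (n + 1) = R n ∧ R n = {p : S × S | Robust ℓ τ p.1 p.2}) ∧
    (∀ R' : Set (S × S), IsBisim ℓ τ R' →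
      IsGreatestBisimIn ℓ τ (PruneFn (FilterFn ℓ τ R')) R' →
      R' ⊆ {p : S × S | Robust ℓ τ p.1 p.2}) ∧
    IsGreatestBisimIn ℓ τ
      (PruneFn (FilterFn ℓ τ {p : S × S | Robust ℓ τ p.1 p.2}))
      {p : S × S | Robust ℓ τ p.1 p.2} :=
  have ⟨hdecr, hstable, hgreatest, hfixed⟩ := algorithm_computes_robust_bisimilarity_general hτ
    (hR0 ▸ fun _ hp => ⟨_, isBisim_robustBisimilarity hτ, hp⟩)
    (hR0 ▸ fun _ ⟨_, hst, htu⟩ => hst.trans hτ htu) hstep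
  ⟨hdecr, hstable, fun R' _ => hgreatest R', hfixed⟩
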